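/- arXiv:2308.11353 — 5 statements merged into one kernel-verified Lean document; each statement's English description precedes it below -/
import Mathlib

section
/- For every filtered cochain complex (K, d) of finite depth S over a field 𝕜 there exist subspaces T, P ⊆ K such that K is the internal direct sum K = T ⊕ d(T) ⊕ P, d(P) ⊆ P, for every j = 0, …, S one has d(K_j) ⊆ d(T) + K_{j+1}, and for every j = 0, …, S the linear map sending α ∈ T ∩ K_j to the class of dα in K_j/K_{j+1} has kernel exactly T ∩ K_{j+1} (equivalently, the induced map (T ∩ K_j)/(T ∩ K_{j+1}) → K_j/K_{j+1}, α ↦ dα mod K_{j+1}, is injective). -/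
/-- `A ⊕ B ⊕ C = K` as an internal direct sum: every element of `K` is uniquely
the sum of an element of `A`, an element of `B` and an element of `C`. -/
def IsInternalTriple {𝕜 K : Type*} [Field 𝕜] [AddCommGroup K] [Module 𝕜 K]
    (A B C : Submodule 𝕜 K) : Prop :=
  ∀ x : K, ∃! p : A × B × C, (p.1 : K) + (p.2.1 : K) + (p.2.2 : K) = x

theorem aux_T {𝕜 K : Type*} [Field 𝕜] [AddCommGroup K] [Module 𝕜 K]
    (S : ℕ) (Kfil : ℕ → Submodule 𝕜 K) (d : Module.End 𝕜 K)
    (hmono : ∀ j, Kfil (j + 1) ≤ Kfil j)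
    (hbot : Kfil (S + 1) = ⊥)
    (hdK : ∀ j, ∀ x ∈ Kfil j, d x ∈ Kfil j) (n : ℕ) :
    ∀ j, j + n = S + 1 → ∃ T : Submodule 𝕜 K, T ≤ Kfil j ∧
      (∀ i, j ≤ i → ∀ x ∈ Kfil i, d x ∈ Submodule.map d T ⊔ Kfil (i + 1)) ∧
      (∀ i, j ≤ i → ∀ α ∈ T, α ∈ Kfil i → d α ∈ Kfil (i + 1) → α ∈ Kfil (i + 1)) := by
  have anti : Antitone Kfil := antitone_nat_of_succ_le hmono
  induction n with
  | zero =>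
    intro j hj
    refine ⟨⊥, bot_le, ?_, ?_⟩
    · intro i hi x hx
      have h := anti (show S + 1 ≤ i by omega) hx
      rw [hbot, Submodule.mem_bot] at h
      simp [h]
    · intro i hi α hα _ _
      rw [Submodule.mem_bot] at hα
      simp [hα]
  | succ n ih =>
    intro j hj
    obtain ⟨T, hT, h3, h4⟩ := ih (j + 1) (by omega)
    obtain ⟨C, hC⟩ := exists_isCompl (Kfil j ⊓ (Kfil (j + 1)).comap d)
    have hCz : ∀ c ∈ C, c ∈ Kfil j → d c ∈ Kfil (j + 1) → c = 0 := by
      intro c hc hcj hdc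
      exact (Submodule.disjoint_def.1 hC.disjoint) c ⟨hcj, hdc⟩ hc
    refine ⟨T ⊔ (C ⊓ Kfil j), sup_le (hT.trans (hmono j)) inf_le_right, ?_, ?_⟩
    · intro i hi x hx
      rcases Nat.eq_or_lt_of_le hi with rfl | hlt
      · have hxt : x ∈ (Kfil j ⊓ (Kfil (j + 1)).comap d) ⊔ C := by
          rw [hC.sup_eq_top]; trivial
        obtain ⟨z, hz, c, hc, rfl⟩ := Submodule.mem_sup.1 hxt
        have hcj : c ∈ Kfil j := by
          have := (Kfil j).sub_mem hx hz.1
          simpa using this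
        rw [map_add, add_comm (d z)]
        exact Submodule.add_mem_sup
          (Submodule.mem_map_of_mem (Submodule.mem_sup_right ⟨hc, hcj⟩)) hz.2
      · have hle : Submodule.map d T ⊔ Kfil (i + 1) ≤
            Submodule.map d (T ⊔ (C ⊓ Kfil j)) ⊔ Kfil (i + 1) :=
          sup_le_sup (Submodule.map_mono le_sup_left) le_rfl
        exact hle (h3 i hlt x hx)
    · intro i hi α hα hαi hd
      obtain ⟨t, ht, c, ⟨hc, hcj⟩, rfl⟩ := Submodule.mem_sup.1 hα
      have htj := hT ht
      have hd' : d (t + c) ∈ Kfil (j + 1) := anti (by omega) hd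
      have hc0 : c = 0 := by
        apply hCz c hc hcj
        have := (Kfil (j + 1)).sub_mem hd' (hdK _ _ htj)
        simpa using this
      subst hc0
      rw [add_zero] at *
      rcases Nat.eq_or_lt_of_le hi with rfl | hlt
      · exact htj
      · exact h4 i hlt t ht hαi hd

theorem statement0
    {𝕜 K : Type*} [Field 𝕜] [AddCommGroup K] [Module 𝕜 K]
    (S : ℕ) (Kfil : ℕ → Submodule 𝕜 K) (d : Module.End 𝕜 K)
    (hdd : d * d = 0)
    (hK0 : Kfil 0 = ⊤)
    (hmono : ∀ j, Kfil (j + 1) ≤ Kfil j)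
    (hbot : Kfil (S + 1) = ⊥)
    (hdK : ∀ j, ∀ x ∈ Kfil j, d x ∈ Kfil j)
    :
    ∃ T P : Submodule 𝕜 K,
      IsInternalTriple T (Submodule.map d T) P ∧
      (∀ x ∈ P, d x ∈ P) ∧
      (∀ j ≤ S, ∀ x ∈ Kfil j, d x ∈ Submodule.map d T ⊔ Kfil (j + 1)) ∧
      (∀ j ≤ S, ∀ α ∈ T, α ∈ Kfil j → (d α ∈ Kfil (j + 1) ↔ α ∈ Kfil (j + 1))) := by
  obtain ⟨T, -, h3, h4⟩ := aux_T S Kfil d hmono hbot hdK (S + 1) 0 (by omega)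
  have hd2 : ∀ x, d (d x) = 0 := fun x => by
    have := LinearMap.congr_fun hdd x
    simpa using this
  have hinj : ∀ α ∈ T, d α = 0 → α = 0 := by
    intro α hα h0
    have : ∀ i, α ∈ Kfil i := by
      intro i
      induction i with
      | zero => rw [hK0]; trivial
      | succ i ih => exact h4 i (Nat.zero_le _) α hα ih (by rw [h0]; exact zero_mem _)
    simpa [hbot] using this (S + 1)
  obtain ⟨φ, hφ⟩ := LinearMap.exists_leftInverse_of_injective (d.comp T.subtype) (by
    rw [LinearMap.ker_eq_bot']
    intro m hm
    exact Subtype.ext (hinj m m.2 hm))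
  have hφ' : ∀ t : T, φ (d t) = t := fun t => LinearMap.congr_fun hφ t
  refine ⟨T, LinearMap.ker φ ⊓ LinearMap.ker (φ.comp d), ?_, ?_, ?_, ?_⟩
  · intro x
    refine ⟨⟨φ (d x), ⟨d (φ x - φ (φ (d x)) : T), Submodule.mem_map_of_mem (Subtype.property _)⟩,
      ⟨x - φ (d x) - d (φ x - φ (φ (d x)) : T), ?_, ?_⟩⟩, ?_, ?_⟩
    · rw [SetLike.mem_coe, LinearMap.mem_ker, map_sub, map_sub, hφ']
      abel
    · rw [SetLike.mem_coe, LinearMap.mem_ker, LinearMap.comp_apply, map_sub, map_sub, hd2,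
        map_sub, map_sub, hφ', map_zero]
      abel
    · dsimp only
      abel
    · rintro ⟨t, ⟨_, s, hs, rfl⟩, ⟨p, hp1, hp2⟩⟩ h
      dsimp only at h
      have hp1' : φ p = 0 := hp1
      have hp2' : φ (d p) = 0 := hp2
      have e1 : φ (d x) = t := by
        rw [← h]
        simp only [map_add, hd2, hφ', hp2', map_zero, add_zero]
      have e2 : φ x = φ t + ⟨s, hs⟩ := by
        rw [← h, map_add, map_add, hp1', hφ' ⟨s, hs⟩, add_zero]
      have e3 : φ x - φ (φ (d x)) = ⟨s, hs⟩ := by rw [e1, e2]; abel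
      have e4 : p = x - φ (d x) - d (φ x - φ (φ (d x)) : T) := by
        rw [e3, e1, ← h]; abel
      refine Prod.ext e1.symm (Prod.ext (Subtype.ext ?_) (Subtype.ext e4))
      dsimp only
      rw [e3]
  · rintro x ⟨_, hx⟩
    refine ⟨hx, ?_⟩
    rw [SetLike.mem_coe, LinearMap.mem_ker, LinearMap.comp_apply, hd2, map_zero]
  · exact fun j _ => h3 j (Nat.zero_le _)
  · exact fun j _ α hα hj => ⟨h4 j (Nat.zero_le _) α hα hj, hdK _ _⟩
end

section
/- Let T, P ⊆ K be subspaces such that K is the internal direct sum K = T ⊕ d(T) ⊕ P, d(P) ⊆ P, d(K_j) ⊆ d(T) + K_{j+1} for all j = 0, …, S, and for each j the linear map sending α ∈ T ∩ K_j to the class of dα in K_j/K_{j+1} has kernel exactly T ∩ K_{j+1}. Then the inclusion of (P, d|_P) into (K, d) induces a linear isomorphism ker(d|_P)/im(d|_P) ≅ ker d / im d. -/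
theorem statement1
    {𝕜 K : Type*} [Field 𝕜] [AddCommGroup K] [Module 𝕜 K]
    (S : ℕ) (Kfil : ℕ → Submodule 𝕜 K) (d : Module.End 𝕜 K)
    (hdd : d * d = 0)
    (hK0 : Kfil 0 = ⊤)
    (hmono : ∀ j, Kfil (j + 1) ≤ Kfil j)
    (hbot : Kfil (S + 1) = ⊥)
    (hdK : ∀ j, ∀ x ∈ Kfil j, d x ∈ Kfil j)
    (T P : Submodule 𝕜 K)
    (hsum : IsInternalTriple T (Submodule.map d T) P)
    (hdP : ∀ x ∈ P, d x ∈ P)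
    (hdKT : ∀ j ≤ S, ∀ x ∈ Kfil j, d x ∈ Submodule.map d T ⊔ Kfil (j + 1))
    (hker : ∀ j ≤ S, ∀ α ∈ T, α ∈ Kfil j → (d α ∈ Kfil (j + 1) ↔ α ∈ Kfil (j + 1))) :
    ∃ e : (↥(P ⊓ LinearMap.ker d) ⧸
            (Submodule.map d P).comap (P ⊓ LinearMap.ker d).subtype) ≃ₗ[𝕜]
          (↥(LinearMap.ker d) ⧸ (LinearMap.range d).comap (LinearMap.ker d).subtype),
      ∀ (x : ↥(P ⊓ LinearMap.ker d)) (y : ↥(LinearMap.ker d)), (y : K) = (x : K) →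
        e (Submodule.Quotient.mk x) = Submodule.Quotient.mk y := by
  have hdd' : ∀ x, d (d x) = 0 := fun x => by
    have := LinearMap.congr_fun hdd x
    simpa using this
  have hinj : ∀ α ∈ T, d α = 0 → α = 0 := by
    intro α hα h0
    have key : ∀ j, j ≤ S + 1 → α ∈ Kfil j := by
      intro j
      induction j with
      | zero => intro _; rw [hK0]; trivial
      | succ k ih =>
        intro hk
        refine (hker k (by omega) α hα (ih (by omega))).1 ?_
        rw [h0]
        exact zero_mem _
    have h := key (S + 1) le_rfl
    rw [hbot] at h
    simpa using h
  have hdisj : ∀ t ∈ T, ∀ p ∈ P, ∀ q ∈ P, d t + p = q → d t = 0 := by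
    intro t ht p hp q hq h
    have h2 := (hsum q).unique
      (y₁ := (0, ⟨d t, Submodule.mem_map_of_mem ht⟩, ⟨p, hp⟩)) (y₂ := (0, 0, ⟨q, hq⟩))
      (by simpa using h) (by simp)
    have h3 := congrArg (fun z => ((z.2.1 : Submodule.map d T) : K)) h2
    simpa using h3
  have hdec : ∀ x : K, ∃ t ∈ T, ∃ t' ∈ T, ∃ p ∈ P, x = t + d t' + p := by
    intro x
    obtain ⟨⟨⟨t, ht⟩, ⟨_, ⟨t', ht', rfl⟩⟩, ⟨p, hp⟩⟩, h, -⟩ := hsum x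
    exact ⟨t, ht, t', ht', p, hp, h.symm⟩
  let ι : ↥(P ⊓ LinearMap.ker d) →ₗ[𝕜] ↥(LinearMap.ker d) :=
    Submodule.inclusion inf_le_right
  have hle : (Submodule.map d P).comap (P ⊓ LinearMap.ker d).subtype ≤
      ((LinearMap.range d).comap (LinearMap.ker d).subtype).comap ι := by
    rintro x ⟨y, -, hy⟩
    exact ⟨y, hy⟩
  let f := Submodule.mapQ _ _ ι hle
  have hf : Function.Bijective f := by
    constructor
    · rw [injective_iff_map_eq_zero]
      intro z hz
      obtain ⟨x, rfl⟩ := Submodule.Quotient.mk_surjective _ z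
      have hz' : Submodule.Quotient.mk (ι x) = 
        (0 : ↥(LinearMap.ker d) ⧸ (LinearMap.range d).comap (LinearMap.ker d).subtype) := hz
      rw [Submodule.Quotient.mk_eq_zero] at hz'
      obtain ⟨w, hw⟩ := hz'
      have hw' : d w = (x : K) := hw
      obtain ⟨t, ht, t', ht', p, hp, rfl⟩ := hdec w
      rw [map_add, map_add, hdd', add_zero] at hw'
      have h0 := hdisj t ht (d p) (hdP p hp) x x.2.1 hw'
      rw [h0, zero_add] at hw'
      rw [Submodule.Quotient.mk_eq_zero]
      exact ⟨p, hp, hw'⟩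
    · intro z
      obtain ⟨⟨x, hx⟩, rfl⟩ := Submodule.Quotient.mk_surjective _ z
      obtain ⟨t, ht, t', ht', p, hp, rfl⟩ := hdec x
      have hx' := LinearMap.mem_ker.1 hx
      rw [map_add, map_add, hdd', add_zero] at hx'
      have h0 := hdisj t ht (d p) (hdP p hp) 0 (zero_mem _) hx'
      have ht0 := hinj t ht h0
      rw [h0, zero_add] at hx'
      refine ⟨Submodule.Quotient.mk ⟨p, hp, hx'⟩, ?_⟩
      change Submodule.Quotient.mk (ι ⟨p, hp, hx'⟩) = _
      rw [Submodule.Quotient.eq]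
      refine ⟨-t', ?_⟩
      change d (-t') = p - (t + d t' + p)
      rw [ht0, map_neg]
      abel
  refine ⟨LinearEquiv.ofBijective f hf, ?_⟩
  intro x y hxy
  have : y = ι x := Subtype.ext hxy
  subst this
  rfl
end

section
/- Suppose K = T ⊕ d(T) ⊕ P and K = T̃ ⊕ d(T̃) ⊕ P̃ are two internal direct sum decompositions, each satisfying: d(P) ⊆ P (respectively d(P̃) ⊆ P̃), d(K_j) ⊆ d(T) + K_{j+1} (respectively d(K_j) ⊆ d(T̃) + K_{j+1}) for all j = 0, …, S, and for each j the map α ↦ dα mod K_{j+1} on T ∩ K_j (respectively on T̃ ∩ K_j) has kernel T ∩ K_{j+1} (respectively T̃ ∩ K_{j+1}). Then there exists a linear isomorphism φ : P̃ → P with φ ∘ (d|_{P̃}) = (d|_P) ∘ φ, i.e. (P, d|_P) and (P̃, d|_{P̃}) are isomorphic as cochain complexes. -/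
section Helpers

variable {𝕜 K : Type*} [Field 𝕜] [AddCommGroup K] [Module 𝕜 K]

theorem aux_mem (S : ℕ) (F : ℕ → Submodule 𝕜 K) (d : Module.End 𝕜 K)
    (hK0 : F 0 = ⊤) (hmono : ∀ j, F (j + 1) ≤ F j)
    (T : Submodule 𝕜 K)
    (hker : ∀ j ≤ S, ∀ α ∈ T, α ∈ F j → (d α ∈ F (j + 1) ↔ α ∈ F (j + 1)))
    (j : ℕ) (hj : j ≤ S + 1) (t : K) (ht : t ∈ T) (h : d t ∈ F j) : t ∈ F j := by
  induction j with
  | zero => rw [hK0]; trivial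
  | succ j ih =>
    exact (hker j (by omega) t ht (ih (by omega) (hmono j h))).1 h

theorem aux_strict (S : ℕ) (F : ℕ → Submodule 𝕜 K) (d : Module.End 𝕜 K)
    (hd : ∀ x, d (d x) = 0) (hdK : ∀ j, ∀ x ∈ F j, d x ∈ F j)
    (T : Submodule 𝕜 K)
    (hm : ∀ j ≤ S + 1, ∀ t ∈ T, d t ∈ F j → t ∈ F j)
    (j : ℕ) (hj : j ≤ S + 1) (x : K) (hx : x ∈ T ⊔ Submodule.map d T) (h : x ∈ F j) :
    ∃ t ∈ T, ∃ u ∈ T, t ∈ F j ∧ u ∈ F j ∧ x = t + d u := by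
  obtain ⟨t, ht, y, ⟨u, hu, rfl⟩, rfl⟩ := Submodule.mem_sup.1 hx
  have h1 : d t ∈ F j := by simpa [hd] using hdK j _ h
  have h2 := hm j hj t ht h1
  have h3 : d u ∈ F j := by simpa using (F j).sub_mem h h2
  exact ⟨t, ht, u, hu, h2, hm j hj u hu h3, rfl⟩

theorem aux_approx (S : ℕ) (F : ℕ → Submodule 𝕜 K) (d : Module.End 𝕜 K)
    (hmono : ∀ j, F (j + 1) ≤ F j) (hdK : ∀ j, ∀ x ∈ F j, d x ∈ F j)
    (T : Submodule 𝕜 K)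
    (hdKT : ∀ j ≤ S, ∀ x ∈ F j, d x ∈ Submodule.map d T ⊔ F (j + 1))
    (hm : ∀ j ≤ S + 1, ∀ t ∈ T, d t ∈ F j → t ∈ F j)
    (j : ℕ) (hj : j ≤ S) (x : K) (h : x ∈ F j) :
    ∃ t ∈ T, t ∈ F j ∧ ∃ k ∈ F (j + 1), d x = d t + k := by
  obtain ⟨y, ⟨t, ht, rfl⟩, k, hk, e⟩ := Submodule.mem_sup.1 (hdKT j hj x h)
  refine ⟨t, ht, hm j (by omega) t ht ?_, k, hk, e.symm⟩
  rw [← add_sub_cancel_right (d t) k, e]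
  exact (F j).sub_mem (hdK j x h) (hmono j hk)

/-- extension of filtered maps -/
theorem aux_ext (S : ℕ) (F : ℕ → Submodule 𝕜 K)
    (hmono : ∀ j, F (j + 1) ≤ F j) (hbot : F (S + 1) = ⊥)
    (A : Submodule 𝕜 K) (W : ℕ → Submodule 𝕜 K) (hW : ∀ j, W (j + 1) ≤ W j)
    (f : Module.End 𝕜 K) (hf : ∀ j ≤ S, ∀ x ∈ A, x ∈ F j → f x ∈ W j) :
    ∃ g : Module.End 𝕜 K, (∀ x ∈ A, g x = f x) ∧ ∀ j ≤ S + 1, ∀ x ∈ F j, g x ∈ W j := by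
  have anti : Antitone F := antitone_nat_of_succ_le hmono
  have key : ∀ n ≤ S + 1, ∃ g : Module.End 𝕜 K, (∀ x ∈ A, g x = f x) ∧
      ∀ j ≤ S + 1, S + 1 - n ≤ j → ∀ x ∈ F j, g x ∈ W j := by
    intro n
    induction n with
    | zero =>
      intro _
      refine ⟨f, fun _ _ => rfl, fun j hj hj' x hx => ?_⟩
      obtain rfl : j = S + 1 := by omega
      rw [hbot, Submodule.mem_bot] at hx
      simp [hx]
    | succ n ih =>
      intro hn
      obtain ⟨g, hg1, hg2⟩ := ih (by omega)
      obtain ⟨j, hj⟩ : ∃ j, j = S - n := ⟨_, rfl⟩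
      have hD : A ⊓ F j ⊔ F (j + 1) ≤ F j := sup_le inf_le_right (hmono j)
      obtain ⟨C₀, hC₀⟩ := Submodule.exists_isCompl
        (Submodule.comap (F j).subtype (A ⊓ F j ⊔ F (j + 1)))
      have hC : ∀ x ∈ F j, ∃ y ∈ A ⊓ F j ⊔ F (j + 1), ∃ c ∈ C₀.map (F j).subtype, x = y + c := by
        intro x hx
        have : (⟨x, hx⟩ : F j) ∈ Submodule.comap (F j).subtype (A ⊓ F j ⊔ F (j + 1)) ⊔ C₀ := by
          rw [hC₀.sup_eq_top]; trivial
        obtain ⟨y, hy, c, hc, e⟩ := Submodule.mem_sup.1 this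
        exact ⟨y, hy, c, ⟨c, hc, rfl⟩, by simpa using (congrArg Subtype.val e).symm⟩
      have hdis : Disjoint (A ⊔ F (j + 1)) (C₀.map (F j).subtype) := by
        rw [Submodule.disjoint_def]
        rintro _ hx ⟨c, hc, rfl⟩
        obtain ⟨a, ha, k, hk, e⟩ := Submodule.mem_sup.1 hx
        have hcc : c ∈ Submodule.comap (F j).subtype (A ⊓ F j ⊔ F (j + 1)) := by
          rw [Submodule.mem_comap, ← e]
          refine Submodule.add_mem_sup ⟨ha, ?_⟩ hk
          have : a = (c : K) - k := by rw [eq_sub_iff_add_eq]; exact e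
          rw [this]
          exact (F j).sub_mem c.2 (hmono j hk)
        have := (Submodule.disjoint_def.1 hC₀.disjoint) c hcc hc
        simp [this]
      obtain ⟨B, hB, hBC⟩ := hdis.exists_isCompl
      have hp1 : ∀ x ∈ A ⊔ F (j + 1), g ((B.projectionOnto _ hBC x : B) : K) = g x := by
        intro x hx
        have := Submodule.projectionOnto_apply_left hBC ⟨x, hB hx⟩
        simp only at this
        rw [this]
      have hp2 : ∀ x ∈ C₀.map (F j).subtype,
          g ((B.projectionOnto _ hBC x : B) : K) = 0 := by
        intro x hx
        have := Submodule.projectionOnto_apply_right hBC ⟨x, hx⟩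
        simp only at this
        rw [this]; simp
      refine ⟨g ∘ₗ B.subtype ∘ₗ B.projectionOnto _ hBC, fun x hx => ?_, ?_⟩
      · rw [← hg1 x hx]
        exact hp1 x (Submodule.mem_sup_left hx)
      · intro i hi hi' x hx
        change g ((B.projectionOnto _ hBC x : B) : K) ∈ W i
        rcases Nat.lt_or_ge j i with hlt | hge
        · rw [hp1 x (Submodule.mem_sup_right (anti hlt hx))]
          exact hg2 i hi (by omega) x hx
        · obtain rfl : i = j := by omega
          obtain ⟨y, hy, c, hc, rfl⟩ := hC x hx
          rw [map_add, Submodule.coe_add, map_add, hp2 c hc, add_zero,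
            hp1 y ((sup_le_sup_right inf_le_left _ : A ⊓ F i ⊔ F (i + 1) ≤ A ⊔ F (i + 1)) hy)]
          obtain ⟨a, ⟨ha, ha'⟩, k, hk, rfl⟩ := Submodule.mem_sup.1 hy
          rw [map_add, hg1 a ha]
          exact (W i).add_mem (hf i (by omega) a ha ha')
            (hW i (hg2 (i + 1) (by omega) (by omega) k hk))
  obtain ⟨g, h1, h2⟩ := key (S + 1) le_rfl
  exact ⟨g, h1, fun j hj => h2 j hj (by omega)⟩

theorem aux_homotopy (S : ℕ) (F : ℕ → Submodule 𝕜 K) (d : Module.End 𝕜 K)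
    (hd : ∀ x, d (d x) = 0) (hbot : F (S + 1) = ⊥)
    (hmono : ∀ j, F (j + 1) ≤ F j) (hdK : ∀ j, ∀ x ∈ F j, d x ∈ F j)
    (T : Submodule 𝕜 K)
    (hm : ∀ j ≤ S + 1, ∀ t ∈ T, d t ∈ F j → t ∈ F j) :
    ∃ g : Module.End 𝕜 K, (∀ t ∈ T, g t = 0) ∧ (∀ t ∈ T, g (d t) = t) ∧
      ∀ j ≤ S + 1, ∀ x ∈ F j, g x ∈ T ⊓ F j := by
  have hinj : ∀ t ∈ T, d t = 0 → t = 0 := by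
    intro t ht h
    have := hm (S + 1) le_rfl t ht (by rw [h]; exact zero_mem _)
    rwa [hbot, Submodule.mem_bot] at this
  obtain ⟨l, hl⟩ := LinearMap.exists_leftInverse_of_injective (T.mkQ ∘ₗ d ∘ₗ T.subtype) (by
    rw [LinearMap.ker_eq_bot']
    intro t ht
    have h1 : d (t : K) ∈ T := by simpa using ht
    exact Subtype.ext (hinj t t.2 (hinj _ h1 (hd _))))
  have hf1 : ∀ t ∈ T, (T.subtype ∘ₗ l ∘ₗ T.mkQ) t = 0 := by
    intro t ht
    have : T.mkQ t = 0 := by simpa using ht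
    simp only [LinearMap.comp_apply, this, map_zero]
  have hf2 : ∀ t ∈ T, (T.subtype ∘ₗ l ∘ₗ T.mkQ) (d t) = t := by
    intro t ht
    exact congrArg Subtype.val (LinearMap.congr_fun hl ⟨t, ht⟩)
  obtain ⟨g, hg1, hg2⟩ := aux_ext S F hmono hbot (T ⊔ Submodule.map d T) (fun j => T ⊓ F j)
    (fun j => inf_le_inf_left _ (hmono j)) (T.subtype ∘ₗ l ∘ₗ T.mkQ) (by
      intro j hj x hx hxj
      obtain ⟨t, ht, u, hu, htj, huj, rfl⟩ := aux_strict S F d hd hdK T hm j (by omega) x hx hxj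
      rw [map_add, hf1 t ht, hf2 u hu, zero_add]
      exact ⟨hu, huj⟩)
  refine ⟨g, fun t ht => ?_, fun t ht => ?_, hg2⟩
  · rw [hg1 t (Submodule.mem_sup_left ht), hf1 t ht]
  · rw [hg1 _ (Submodule.mem_sup_right ⟨t, ht, rfl⟩), hf2 t ht]

theorem aux_compl (A B C : Submodule 𝕜 K) (h : IsInternalTriple A B C) :
    IsCompl C (A ⊔ B) := by
  constructor
  · rw [Submodule.disjoint_def]
    intro x hx hx'
    obtain ⟨a, ha, b, hb, e⟩ := Submodule.mem_sup.1 hx'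
    have := (h x).unique (y₁ := (⟨a, ha⟩, ⟨b, hb⟩, 0)) (y₂ := (0, 0, ⟨x, hx⟩))
      (by simpa using e) (by simp)
    have := congrArg (fun p => (p.2.2 : K)) this
    simpa using this.symm
  · rw [codisjoint_iff, eq_top_iff]
    intro x _
    obtain ⟨⟨a, b, c⟩, e, _⟩ := h x
    rw [← e, add_comm]
    exact Submodule.add_mem_sup c.2 (Submodule.add_mem_sup a.2 b.2)

end Helpers

theorem statement2
    {𝕜 K : Type*} [Field 𝕜] [AddCommGroup K] [Module 𝕜 K]
    (S : ℕ) (Kfil : ℕ → Submodule 𝕜 K) (d : Module.End 𝕜 K)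
    (hdd : d * d = 0)
    (hK0 : Kfil 0 = ⊤)
    (hmono : ∀ j, Kfil (j + 1) ≤ Kfil j)
    (hbot : Kfil (S + 1) = ⊥)
    (hdK : ∀ j, ∀ x ∈ Kfil j, d x ∈ Kfil j)
    (T P : Submodule 𝕜 K)
    (hsum : IsInternalTriple T (Submodule.map d T) P)
    (hdP : ∀ x ∈ P, d x ∈ P)
    (hdKT : ∀ j ≤ S, ∀ x ∈ Kfil j, d x ∈ Submodule.map d T ⊔ Kfil (j + 1))
    (hker : ∀ j ≤ S, ∀ α ∈ T, α ∈ Kfil j → (d α ∈ Kfil (j + 1) ↔ α ∈ Kfil (j + 1)))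
    (T' P' : Submodule 𝕜 K)
    (hsum' : IsInternalTriple T' (Submodule.map d T') P')
    (hdP' : ∀ x ∈ P', d x ∈ P')
    (hdKT' : ∀ j ≤ S, ∀ x ∈ Kfil j, d x ∈ Submodule.map d T' ⊔ Kfil (j + 1))
    (hker' : ∀ j ≤ S, ∀ α ∈ T', α ∈ Kfil j → (d α ∈ Kfil (j + 1) ↔ α ∈ Kfil (j + 1))) :
    ∃ e : ↥P' ≃ₗ[𝕜] ↥P,
      ∀ x y : ↥P', (y : K) = d (x : K) → (e y : K) = d (e x : K) := by
  have hd : ∀ x, d (d x) = 0 := fun x => LinearMap.congr_fun hdd x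
  have hm := aux_mem S Kfil d hK0 hmono T hker
  have hm' := aux_mem S Kfil d hK0 hmono T' hker'
  have hc := aux_compl _ _ _ hsum
  have hc' := aux_compl _ _ _ hsum'
  obtain ⟨g, hg1, hg2, hg3⟩ := aux_homotopy S Kfil d hd hbot hmono hdK T' hm'
  obtain ⟨r, hr⟩ : ∃ r : Module.End 𝕜 K, ∀ x, r x = g (d x) + d (g x) :=
    ⟨g ∘ₗ d + d ∘ₗ g, fun x => rfl⟩
  have hrd : ∀ x, r (d x) = d (r x) := by intro x; simp [hr, hd]
  have hrt : ∀ t ∈ T', r t = t := by intro t ht; simp [hr, hg1 t ht, hg2 t ht]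
  have hrdt : ∀ t ∈ T', r (d t) = d t := by intro t ht; rw [hrd, hrt t ht]
  have hgT : ∀ x, g x ∈ T' := fun x => (hg3 0 (by omega) x (by rw [hK0]; trivial)).1
  have hrA : ∀ x, r x ∈ T' ⊔ Submodule.map d T' := by
    intro x
    rw [hr]
    exact Submodule.add_mem_sup (hgT _) ⟨_, hgT _, rfl⟩
  have hrid : ∀ x ∈ T' ⊔ Submodule.map d T', r x = x := by
    intro x hx
    obtain ⟨t, ht, y, ⟨u, hu, rfl⟩, rfl⟩ := Submodule.mem_sup.1 hx
    rw [map_add, hrt t ht, hrdt u hu]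
  have hrF : ∀ j ≤ S + 1, ∀ x ∈ Kfil j, r x ∈ Kfil j := by
    intro j hj x hx
    rw [hr]
    exact (Kfil j).add_mem (hg3 j hj _ (hdK j x hx)).2 (hdK j _ (hg3 j hj x hx).2)
  -- if `d t` is killed by `r` modulo the next step, then `d t` lies in the next step
  have hstep : ∀ j ≤ S, ∀ x ∈ Kfil j, r (d x) ∈ Kfil (j + 1) → d x ∈ Kfil (j + 1) := by
    intro j hj x hx h
    obtain ⟨t, ht, htj, k, hk, e⟩ := aux_approx S Kfil d hmono hdK T' hdKT' hm' j hj x hx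
    rw [e, map_add, hrdt t ht] at h
    rw [e]
    refine (Kfil (j + 1)).add_mem ?_ hk
    simpa using (Kfil (j + 1)).sub_mem h (hrF (j + 1) (by omega) k hk)
  have hinj : ∀ y ∈ T ⊔ Submodule.map d T, r y = 0 → y = 0 := by
    intro y hy hry
    have : ∀ j ≤ S + 1, y ∈ Kfil j := by
      intro j
      induction j with
      | zero => intro _; rw [hK0]; trivial
      | succ j ih =>
        intro hj
        obtain ⟨t, ht, u, hu, htj, huj, rfl⟩ :=
          aux_strict S Kfil d hd hdK T hm j (by omega) y hy (ih (by omega))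
        have h1 : r (d t) = 0 := by
          have := hrd (t + d u)
          rw [hry] at this
          simpa [hd] using this
        have h2 : t ∈ Kfil (j + 1) := hm _ hj t ht
          (hstep j (by omega) t htj (by rw [h1]; exact zero_mem _))
        refine (Kfil (j + 1)).add_mem h2 (hstep j (by omega) u huj ?_)
        rw [map_add] at hry
        rw [eq_neg_of_add_eq_zero_right hry]
        exact (Kfil (j + 1)).neg_mem (hrF _ hj t h2)
    have h := this (S + 1) le_rfl
    rwa [hbot, Submodule.mem_bot] at h
  have hker_s : ∀ x, x - r x ∈ LinearMap.ker r := by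
    intro x
    rw [LinearMap.mem_ker, map_sub, hrid _ (hrA x), sub_self]
  have hsurj : ∀ n ≤ S + 1, ∀ x ∈ Kfil (S + 1 - n),
      x ∈ (T ⊔ Submodule.map d T) ⊔ LinearMap.ker r := by
    intro n
    induction n with
    | zero =>
      intro _ x hx
      rw [Nat.sub_zero, hbot, Submodule.mem_bot] at hx
      rw [hx]; exact zero_mem _
    | succ n ih =>
      intro hn x hx
      obtain ⟨j, hj⟩ : ∃ j, j = S - n := ⟨_, rfl⟩
      rw [show S + 1 - (n + 1) = j by omega] at hx
      have ih' := ih (by omega)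
      rw [show S + 1 - n = j + 1 by omega] at ih'
      have hjS : j ≤ S := by omega
      set M := (T ⊔ Submodule.map d T) ⊔ LinearMap.ker r with hM
      have hTM : ∀ t ∈ T, t ∈ M := fun t ht =>
        Submodule.mem_sup_left (Submodule.mem_sup_left ht)
      have hdTM : ∀ t ∈ T, d t ∈ M := fun t ht =>
        Submodule.mem_sup_left (Submodule.mem_sup_right ⟨t, ht, rfl⟩)
      have hsM : ∀ x, x - r x ∈ M := fun x => Submodule.mem_sup_right (hker_s x)
      have h1 : ∀ u ∈ Kfil j, d u ∈ M := by
        intro u hu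
        obtain ⟨t, ht, htj, k, hk, e⟩ := aux_approx S Kfil d hmono hdK T hdKT hm j hjS u hu
        rw [e]
        exact M.add_mem (hdTM t ht) (ih' k hk)
      obtain ⟨t, ht, htj, k, hk, e⟩ := aux_approx S Kfil d hmono hdK T hdKT hm j hjS x hx
      have hz : x - t ∈ Kfil j := (Kfil j).sub_mem hx htj
      have hdz : d (x - t) = k := by rw [map_sub, e]; abel
      have hx' : x = t + (((x - t) - r (x - t)) + (g k + d (g (x - t)))) := by
        rw [hr, hdz]; abel
      rw [hx']
      exact M.add_mem (hTM t ht) (M.add_mem (hsM _)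
        (M.add_mem (ih' _ (hg3 (j + 1) (by omega) k hk).2)
          (h1 _ (hg3 j (by omega) _ hz).2)))
  have htop : ∀ x, x ∈ (T ⊔ Submodule.map d T) ⊔ LinearMap.ker r := by
    intro x
    refine hsurj (S + 1) le_rfl x ?_
    rw [Nat.sub_self, hK0]; trivial
  have hp0 : ∀ x, P.projectionOnto _ hc x = 0 ↔ x ∈ T ⊔ Submodule.map d T :=
    fun x => Submodule.projectionOnto_apply_eq_zero_iff hc
  have hpP : ∀ x : P, P.projectionOnto _ hc (x : K) = x :=
    Submodule.projectionOnto_apply_left hc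
  have hpd : ∀ x, ((P.projectionOnto _ hc (d x) : P) : K)
      = d (P.projectionOnto _ hc x : P) := by
    intro x
    have hx : x ∈ P ⊔ (T ⊔ Submodule.map d T) := by rw [hc.sup_eq_top]; trivial
    obtain ⟨p, hp, a, ha, rfl⟩ := Submodule.mem_sup.1 hx
    have hda : d a ∈ T ⊔ Submodule.map d T := by
      obtain ⟨t, ht, y, ⟨u, hu, rfl⟩, rfl⟩ := Submodule.mem_sup.1 ha
      rw [map_add, hd, add_zero]
      exact Submodule.mem_sup_right ⟨t, ht, rfl⟩
    rw [map_add, map_add, map_add, (hp0 _).2 ha, (hp0 _).2 hda, add_zero, add_zero]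
    have e1 := hpP ⟨p, hp⟩
    have e2 := hpP ⟨d p, hdP p hp⟩
    simp only at e1 e2
    rw [e1, e2]
  let ψ : P' →ₗ[𝕜] P := P.projectionOnto _ hc ∘ₗ (LinearMap.id - r) ∘ₗ P'.subtype
  have hψ : ∀ x : P', ψ x = P.projectionOnto _ hc ((x : K) - r x) := fun x => rfl
  have hbij : Function.Bijective ψ := by
    constructor
    · rw [← LinearMap.ker_eq_bot, LinearMap.ker_eq_bot']
      intro x hx
      rw [hψ, hp0] at hx
      have h := hinj _ hx (hker_s _)
      have hxA : (x : K) ∈ T' ⊔ Submodule.map d T' := by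
        rw [sub_eq_zero.1 h]; exact hrA _
      exact Subtype.ext (Submodule.disjoint_def.1 hc'.disjoint _ x.2 hxA)
    · intro p
      obtain ⟨a, ha, y, hy, e⟩ := Submodule.mem_sup.1 (htop (p : K))
      have hy' : y ∈ P' ⊔ (T' ⊔ Submodule.map d T') := by rw [hc'.sup_eq_top]; trivial
      obtain ⟨x, hx, b, hb, rfl⟩ := Submodule.mem_sup.1 hy'
      refine ⟨⟨x, hx⟩, ?_⟩
      rw [hψ]
      have hxy : x - r x = x + b := by
        rw [LinearMap.mem_ker, map_add, hrid b hb] at hy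
        rw [eq_neg_of_add_eq_zero_left hy, sub_neg_eq_add]
      simp only
      rw [hxy]
      have := hpP p
      rw [← e, map_add, (hp0 a).2 ha, zero_add] at this
      exact this
  refine ⟨LinearEquiv.ofBijective ψ hbij, fun x y h => ?_⟩
  simp only [LinearEquiv.ofBijective_apply, hψ]
  rw [h, hrd, ← map_sub, hpd]
end

section
/- Every filtered cochain complex (K, d) of finite depth S over a field admits a base differential d₀ : K → K together with a base transversal T and a base cotransversal C for d₀ (so in particular T ⊆ C). -/
/-- A splitting of the filtration by orthogonal idempotents. -/
theorem exists_filtration_splitting {𝕜 K : Type*} [Field 𝕜] [AddCommGroup K] [Module 𝕜 K]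
    (Kfil : ℕ → Submodule 𝕜 K)
    (hK0 : Kfil 0 = ⊤) (hmono : ∀ j, Kfil (j + 1) ≤ Kfil j) :
    ∃ e : ℕ → Module.End 𝕜 K,
      (∀ i x, e i (e i x) = e i x) ∧ (∀ i j x, i ≠ j → e i (e j x) = 0) ∧
      (∀ j x, x ∈ Kfil j ↔ ∀ i < j, e i x = 0) := by
  have hanti : Antitone Kfil := antitone_nat_of_succ_le hmono
  have hr : ∀ n, ∃ r : Module.End 𝕜 K, (∀ x, r x ∈ Kfil n) ∧ ∀ x ∈ Kfil n, r x = x := by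
    intro n
    obtain ⟨g, hg⟩ := LinearMap.exists_leftInverse_of_injective (Kfil n).subtype
      (Submodule.ker_subtype _)
    refine ⟨(Kfil n).subtype ∘ₗ g, fun x => (g x).2, fun x hx => ?_⟩
    have := LinearMap.congr_fun hg ⟨x, hx⟩
    simpa using congrArg Subtype.val this
  choose r hr1 hr2 using hr
  let p : ℕ → Module.End 𝕜 K := fun n => Nat.rec LinearMap.id (fun n q => r (n + 1) ∘ₗ q) n
  have p0 : ∀ x, p 0 x = x := fun x => rfl
  have ps : ∀ n x, p (n + 1) x = r (n + 1) (p n x) := fun n x => rfl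
  have pm : ∀ n x, p n x ∈ Kfil n := by
    intro n x
    cases n with
    | zero => rw [hK0]; trivial
    | succ n => rw [ps]; exact hr1 _ _
  have pid : ∀ n, ∀ x ∈ Kfil n, p n x = x := by
    intro n
    induction n with
    | zero => intro x _; rfl
    | succ n ih => intro x hx; rw [ps, ih x (hmono n hx), hr2 _ _ hx]
  have pp1 : ∀ i j x, i ≤ j → p i (p j x) = p j x := fun i j x h => pid _ _ (hanti h (pm j x))
  have pp2 : ∀ i j x, i ≤ j → p j (p i x) = p j x := by
    intro i j x h
    induction j, h using Nat.le_induction with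
    | base => exact pid _ _ (pm _ _)
    | succ n h ih => rw [ps, ps, ih]
  refine ⟨fun n => p n - p (n + 1), ?_, ?_, ?_⟩
  · intro i x
    simp only [LinearMap.sub_apply, map_sub]
    rw [pp1 i i x le_rfl, pp1 i (i+1) x (by omega), pp2 i (i+1) x (by omega),
      pp1 (i+1) (i+1) x le_rfl]
    abel
  · intro i j x hij
    simp only [LinearMap.sub_apply, map_sub]
    rcases lt_or_gt_of_ne hij with h | h
    · rw [pp1 i j x (by omega), pp1 i (j+1) x (by omega), pp1 (i+1) j x (by omega),
        pp1 (i+1) (j+1) x (by omega)]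
      abel
    · rw [pp2 j i x (by omega), pp2 (j+1) i x (by omega), pp2 j (i+1) x (by omega),
        pp2 (j+1) (i+1) x (by omega)]
      abel
  · intro j x
    constructor
    · intro hx i hi
      simp only [LinearMap.sub_apply]
      rw [pid i x (hanti (by omega) hx), pid (i+1) x (hanti (by omega) hx), sub_self]
    · intro h
      have : ∀ n ≤ j, p n x = x := by
        intro n
        induction n with
        | zero => intro _; rfl
        | succ n ih =>
          intro hn
          have h1 := h n (by omega)
          simp only [LinearMap.sub_apply] at h1
          rw [← sub_eq_zero.mp h1, ih (by omega)]
      rw [← this j le_rfl]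
      exact pm _ _

theorem statement3
    {𝕜 K : Type*} [Field 𝕜] [AddCommGroup K] [Module 𝕜 K]
    (S : ℕ) (Kfil : ℕ → Submodule 𝕜 K) (d : Module.End 𝕜 K)
    (hdd : d * d = 0)
    (hK0 : Kfil 0 = ⊤)
    (hmono : ∀ j, Kfil (j + 1) ≤ Kfil j)
    (hbot : Kfil (S + 1) = ⊥)
    (hdK : ∀ j, ∀ x ∈ Kfil j, d x ∈ Kfil j)
    :
    ∃ (d0 : Module.End 𝕜 K) (T C : Submodule 𝕜 K),
      d0 * d0 = 0 ∧
      (∀ j, ∀ x ∈ Kfil j, d x - d0 x ∈ Kfil (j + 1)) ∧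
      IsCompl (LinearMap.ker d0) T ∧
      (∀ j, ∀ α ∈ T, (α ∈ Kfil j ↔ d0 α ∈ Kfil j)) ∧
      IsCompl (LinearMap.range d0) C ∧
      T ≤ C := by
  obtain ⟨e, e1, e2, e3⟩ := exists_filtration_splitting Kfil hK0 hmono
  have hanti : Antitone Kfil := antitone_nat_of_succ_le hmono
  have ext0 : ∀ x, (∀ i, e i x = 0) → x = 0 := by
    intro x h
    have := (e3 (S+1) x).2 fun i _ => h i
    rwa [hbot, Submodule.mem_bot] at this
  have ebig : ∀ i x, S + 1 ≤ i → e i x = 0 := by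
    intro i x h
    have h1 : e i x ∈ Kfil i := (e3 _ _).2 fun k hk => e2 _ _ _ hk.ne
    have := hanti h h1
    rwa [hbot, Submodule.mem_bot] at this
  have emem : ∀ i x, e i x ∈ Kfil i := fun i x => (e3 _ _).2 fun k hk => e2 _ _ _ hk.ne
  have esub : ∀ i, ∀ x ∈ Kfil i, x - e i x ∈ Kfil (i + 1) := by
    intro i x hx
    refine (e3 _ _).2 fun k hk => ?_
    rw [map_sub]
    rcases Nat.lt_succ_iff_lt_or_eq.mp hk with h | rfl
    · rw [(e3 _ _).1 hx k h, e2 _ _ _ h.ne, sub_self]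
    · rw [e1, sub_self]
  have ekill : ∀ i, ∀ x ∈ Kfil (i+1), e i x = 0 := fun i x hx => (e3 _ _).1 hx i (by omega)
  have eed : ∀ i, ∀ x ∈ Kfil i, e i (d (e i x)) = e i (d x) := by
    intro i x hx
    have := ekill i _ (hdK _ _ (esub i x hx))
    rw [map_sub, map_sub, sub_eq_zero] at this
    exact this.symm
  -- components of a sum
  have esum : ∀ (f : ℕ → K), (∀ j, e j (f j) = f j) → ∀ i,
      e i (∑ j ∈ Finset.range (S+1), f j) = f i := by
    intro f hf i
    rw [map_sum]
    have h1 : ∀ j, j ≠ i → e i (f j) = 0 := by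
      intro j hj; rw [← hf j]; exact e2 _ _ _ hj.symm
    rw [Finset.sum_eq_single i (fun j _ hj => h1 j hj), hf]
    intro hi
    exact ebig _ _ (by simpa using hi)
  let d0 : Module.End 𝕜 K := ∑ j ∈ Finset.range (S+1), e j ∘ₗ d ∘ₗ e j
  have hd0 : ∀ i x, e i (d0 x) = e i (d (e i x)) := by
    intro i x
    have : d0 x = ∑ j ∈ Finset.range (S+1), e j (d (e j x)) := by
      simp [d0, LinearMap.sum_apply]
    rw [this, esum (fun j => e j (d (e j x))) (fun j => e1 _ _)]
  have hd0e : ∀ i x, d0 (e i x) = e i (d0 x) := by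
    intro i x
    rw [← sub_eq_zero]
    apply ext0
    intro k
    rw [map_sub, hd0]
    by_cases h : k = i
    · subst h; rw [e1, e1, hd0, sub_self]
    · rw [e2 _ _ _ h, e2 _ _ _ h]; simp
  have hdd' : ∀ x, d (d x) = 0 := fun x => LinearMap.congr_fun hdd x
  have hd00 : ∀ x, d0 (d0 x) = 0 := by
    intro x
    apply ext0
    intro i
    rw [hd0, hd0, eed i _ (hdK _ _ (emem _ _)), hdd', map_zero]
  have hT : ∀ j, ∃ T : Submodule 𝕜 K,
      IsCompl (LinearMap.ker d0 ⊓ LinearMap.range (e j)) T := fun j =>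
    Submodule.exists_isCompl _
  choose T' hT' using hT
  let T : Submodule 𝕜 K := ⨅ j, (T' j).comap (e j)
  have memT : ∀ x, x ∈ T ↔ ∀ j, e j x ∈ T' j := by
    intro x; simp [T, Submodule.mem_iInf]
  have key : ∀ α ∈ T, ∀ j, e j (d0 α) = 0 → e j α = 0 := by
    intro α hα j h
    refine Submodule.disjoint_def.mp (hT' j).disjoint _ ⟨?_, ⟨α, rfl⟩⟩ ((memT α).1 hα j)
    change d0 (e j α) = 0
    rw [hd0e, h]
  have dis : Disjoint (LinearMap.ker d0) T := by
    rw [Submodule.disjoint_def]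
    intro x hx hxT
    refine ext0 _ fun i => key x hxT i ?_
    rw [LinearMap.mem_ker.mp hx, map_zero]
  have hcompl : IsCompl (LinearMap.ker d0) T := by
    refine ⟨dis, codisjoint_iff.mpr (eq_top_iff.mpr fun x _ => ?_)⟩
    have hdec : ∀ j, ∃ k t, d0 k = 0 ∧ e j k = k ∧ t ∈ T' j ∧ e j t = t ∧ k + t = e j x := by
      intro j
      have : e j x ∈ (LinearMap.ker d0 ⊓ LinearMap.range (e j)) ⊔ T' j := by
        rw [(hT' j).sup_eq_top]; trivial
      obtain ⟨k, hk, t, ht, hkt⟩ := Submodule.mem_sup.mp this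
      obtain ⟨hk1, ⟨y, hy⟩⟩ := hk
      have hek : e j k = k := by rw [← hy, e1]
      refine ⟨k, t, hk1, hek, ht, ?_, hkt⟩
      rw [eq_sub_of_add_eq' hkt, map_sub, e1, hek]
    choose k t hk1 hk2 ht1 ht2 hkt using hdec
    refine Submodule.mem_sup.mpr ⟨∑ j ∈ Finset.range (S+1), k j, ?_,
      ∑ j ∈ Finset.range (S+1), t j, ?_, ?_⟩
    · rw [LinearMap.mem_ker, map_sum]
      exact Finset.sum_eq_zero fun j _ => hk1 j
    · rw [memT]
      intro j
      rw [esum t ht2]; exact ht1 j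
    · rw [← sub_eq_zero]
      apply ext0
      intro i
      rw [map_sub, map_add, esum t ht2, esum k hk2, hkt, sub_self]
  have hrk : LinearMap.range d0 ≤ LinearMap.ker d0 := by
    rintro _ ⟨x, rfl⟩
    exact hd00 x
  obtain ⟨C, hTC, hC⟩ := (dis.mono_left hrk).symm.exists_isCompl
  refine ⟨d0, T, C, LinearMap.ext hd00, ?_, hcompl, ?_, hC.symm, hTC⟩
  · intro j x hx
    refine (e3 _ _).2 fun i hi => ?_
    rw [map_sub, hd0, eed i x (hanti (by omega) hx), sub_self]
  · intro j α hα
    rw [e3, e3]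
    constructor
    · intro h i hi
      rw [hd0, h i hi]; simp
    · intro h i hi
      exact key α hα i (h i hi)
end

section
/- If α ∈ K satisfies dα = 0, then α − P^∞α ∈ im d, so α and P^∞α lie in the same cohomology class. Consequently the map P^∞ : K → 𝒫 induces a linear isomorphism ker d / im d ≅ ker(d|_𝒫) / im(d|_𝒫), i.e. P^∞ is an isomorphism at the cohomology level. -/
theorem statement7
    {𝕜 K : Type*} [Field 𝕜] [AddCommGroup K] [Module 𝕜 K]
    (S : ℕ) (Kfil : ℕ → Submodule 𝕜 K) (d : Module.End 𝕜 K)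
    (hdd : d * d = 0)
    (hK0 : Kfil 0 = ⊤)
    (hmono : ∀ j, Kfil (j + 1) ≤ Kfil j)
    (hbot : Kfil (S + 1) = ⊥)
    (hdK : ∀ j, ∀ x ∈ Kfil j, d x ∈ Kfil j)
    (d0 : Module.End 𝕜 K)
    (hd00 : d0 * d0 = 0)
    (hd0 : ∀ j, ∀ x ∈ Kfil j, d x - d0 x ∈ Kfil (j + 1))
    (T C : Submodule 𝕜 K)
    (hT : IsCompl (LinearMap.ker d0) T)
    (hTfil : ∀ j, ∀ α ∈ T, (α ∈ Kfil j ↔ d0 α ∈ Kfil j))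
    (hC : IsCompl (LinearMap.range d0) C)
    (hTC : T ≤ C)
    (d0inv : Module.End 𝕜 K)
    (hinvC : ∀ x ∈ C, d0inv x = 0)
    (hinvT : ∀ x ∈ LinearMap.range d0, d0inv x ∈ T)
    (hinvd0 : ∀ x ∈ LinearMap.range d0, d0 (d0inv x) = x)
    (Pop : Module.End 𝕜 K) (hPop : Pop = 1 - d0inv * d - d * d0inv)
    (Pinf : Module.End 𝕜 K) (hPinf : Pinf = Pop ^ S)
    (Pmod : Submodule 𝕜 K) (hPmod : Pmod = LinearMap.range Pinf)
    :
    (∀ α : K, d α = 0 → α - Pinf α ∈ LinearMap.range d) ∧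
    ∃ e : (↥(LinearMap.ker d) ⧸ (LinearMap.range d).comap (LinearMap.ker d).subtype) ≃ₗ[𝕜]
          (↥(Pmod ⊓ LinearMap.ker d) ⧸
            (Submodule.map d Pmod).comap (Pmod ⊓ LinearMap.ker d).subtype),
      ∀ (x : ↥(LinearMap.ker d)) (y : ↥(Pmod ⊓ LinearMap.ker d)), (y : K) = Pinf (x : K) →
        e (Submodule.Quotient.mk x) = Submodule.Quotient.mk y := by
  have hh : d0inv * d0inv = 0 := by
    ext x
    have hx : x ∈ LinearMap.range d0 ⊔ C := by rw [hC.sup_eq_top]; trivial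
    obtain ⟨r, hr, c, hc, rfl⟩ := Submodule.mem_sup.1 hx
    simp [hinvC c hc, hinvC _ (hTC (hinvT r hr))]
  have hPd : Commute Pop d := by
    subst hPop
    simp only [Commute, SemiconjBy, sub_mul, mul_sub, one_mul, mul_one]
    rw [mul_assoc d0inv d d, hdd, ← mul_assoc d d d0inv, hdd]
    simp [mul_assoc]
  have hPh : Commute Pop d0inv := by
    subst hPop
    simp only [Commute, SemiconjBy, sub_mul, mul_sub, one_mul, mul_one]
    rw [mul_assoc d d0inv d0inv, hh, ← mul_assoc d0inv d0inv d, hh]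
    simp [mul_assoc]
  obtain ⟨H, hH, hHP⟩ : ∃ H : Module.End 𝕜 K, 1 - Pinf = d * H + H * d ∧ Commute Pinf H := by
    have hGd : Commute (∑ i ∈ Finset.range S, Pop ^ i) d :=
      Commute.sum_left _ _ _ fun i _ => hPd.pow_left i
    have hGP : Commute Pinf (∑ i ∈ Finset.range S, Pop ^ i) := by
      subst hPinf
      exact Commute.sum_right _ _ _ fun i _ => Commute.pow_pow_self Pop S i
    refine ⟨(∑ i ∈ Finset.range S, Pop ^ i) * d0inv, ?_, ?_⟩
    · rw [hPinf, ← geom_sum_mul_neg Pop S, ← mul_assoc, ← hGd.eq, mul_assoc, mul_assoc, ← mul_add]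
      congr 1
      rw [hPop]; abel
    · exact hGP.mul_right (hPinf ▸ hPh.pow_left S)
  have hPid : Commute Pinf d := hPinf ▸ hPd.pow_left S
  have hcd : ∀ x, Pinf (d x) = d (Pinf x) := fun x => LinearMap.congr_fun hPid.eq x
  have hcH : ∀ x, Pinf (H x) = H (Pinf x) := fun x => LinearMap.congr_fun hHP.eq x
  have hhom : ∀ x, d x = 0 → x - Pinf x = d (H x) := fun x hx => by
    have := LinearMap.congr_fun hH x
    simpa [hx] using this
  refine ⟨fun α hα => ⟨H α, (hhom α hα).symm⟩, ?_⟩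
  subst hPmod
  let f : ↥(LinearMap.ker d) →ₗ[𝕜] ↥(LinearMap.range Pinf ⊓ LinearMap.ker d) :=
    LinearMap.codRestrict _ (Pinf ∘ₗ (LinearMap.ker d).subtype) (fun x => by
      refine ⟨⟨x, rfl⟩, ?_⟩
      have hx : d (x : K) = 0 := x.2
      simp [← hcd, hx])
  have hf : ∀ x, ((f x : ↥(LinearMap.range Pinf ⊓ LinearMap.ker d)) : K) = Pinf x := fun x => rfl
  let g := Submodule.mapQ ((LinearMap.range d).comap (LinearMap.ker d).subtype)
    ((Submodule.map d (LinearMap.range Pinf)).comap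
      (LinearMap.range Pinf ⊓ LinearMap.ker d).subtype) f (by
      rintro x ⟨z, hz⟩
      refine ⟨Pinf z, ⟨z, rfl⟩, ?_⟩
      have hz' : d z = (x : K) := hz
      rw [← hcd, hz']; rfl)
  have hg : Function.Bijective g := by
    constructor
    · rw [injective_iff_map_eq_zero]
      intro q hq
      obtain ⟨x, rfl⟩ := Submodule.Quotient.mk_surjective _ q
      have h1 : Submodule.Quotient.mk (f x) = (0 : _ ⧸ ((Submodule.map d
        (LinearMap.range Pinf)).comap (LinearMap.range Pinf ⊓ LinearMap.ker d).subtype)) := hq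
      rw [Submodule.Quotient.mk_eq_zero] at h1 ⊢
      obtain ⟨w, -, hw⟩ := h1
      have hw' : d w = Pinf x := hw
      refine ⟨w + H x, ?_⟩
      rw [map_add, hw', ← hhom x x.2]
      simp
    · intro q
      obtain ⟨y, rfl⟩ := Submodule.Quotient.mk_surjective _ q
      obtain ⟨y, ⟨z, hz⟩, hy⟩ := y
      refine ⟨Submodule.Quotient.mk ⟨y, hy⟩, ?_⟩
      change Submodule.Quotient.mk (f ⟨y, hy⟩) = _
      symm
      rw [Submodule.Quotient.eq]
      refine ⟨H y, ⟨H z, by rw [hcH, hz]⟩, ?_⟩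
      exact (hhom y hy).symm
  refine ⟨LinearEquiv.ofBijective g hg, fun x y hxy => ?_⟩
  have : y = f x := Subtype.ext hxy
  rw [this]
  rfl
end
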